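/- Let ε_1, …, ε_n be independent Rademacher random variables. The function t = (t_1,…,t_n) ↦ log E| e^{t_1}ε_1 + … + e^{t_n}ε_n | is convex on ℝ^n. -/

import Mathlib

open Finset

/-! The Rademacher average `p x = E‖∑ j, ε j x j v j‖` is a seminorm that does not change when
coordinates of `x` change sign. If `|x| ≤ |y|` then `x` is a convex combination of the sign changes
of `y`, so `p x ≤ p y`. As `exp` is convex, it follows that `G t = p (exp t)` is quasiconvex.
Homogeneity reads `G (t + c) = exp c * G t`, so `t` and `u` can be translated along the diagonal
until `G t = G u = 1`; there quasiconvexity is the required inequality for `log G`. -/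

/-- The sign `±1` encoded by a Boolean, with `true` standing for `+1`. -/
def boolSign (b : Bool) : ℝ := if b then 1 else -1

lemma boolSign_mul_boolSign (a b : Bool) : boolSign a * boolSign b = boolSign (a == b) := by
  cases a <;> cases b <;> simp [boolSign]

lemma abs_boolSign (b : Bool) : |boolSign b| = 1 := by
  cases b <;> simp [boolSign]

lemma convexHull_range_boolSign : convexHull ℝ (Set.range boolSign) = Set.Icc (-1) 1 := by
  have range_eq : Set.range boolSign = {-1, 1} := by
    simp [← Set.image_univ, Set.image_pair, boolSign, Bool.univ_eq]
  rw [range_eq, convexHull_pair, segment_eq_Icc (by norm_num)]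

lemma quasiconvexOn_comp_exp {ι α : Type*} [Preorder α] {F : (ι → ℝ) → α}
    (hF : QuasiconvexOn ℝ (Set.Ici 0) F) (hmono : MonotoneOn F (Set.Ici 0)) :
    QuasiconvexOn ℝ Set.univ fun t : ι → ℝ => F fun j => Real.exp (t j) := by
  rintro r t ⟨-, ht⟩ u ⟨-, hu⟩ a b ha hb hab
  have exp_nonneg (w : ι → ℝ) : (fun j => Real.exp (w j)) ∈ Set.Ici 0 :=
    fun j => (Real.exp_pos (w j)).le
  have hmem := hF r ⟨exp_nonneg t, ht⟩ ⟨exp_nonneg u, hu⟩ ha hb hab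
  have exp_le : (fun j => Real.exp ((a • t + b • u) j)) ≤
      a • (fun j => Real.exp (t j)) + b • fun j => Real.exp (u j) :=
    fun j => convexOn_exp.2 (Set.mem_univ (t j)) (Set.mem_univ (u j)) ha hb hab
  exact ⟨Set.mem_univ _, (hmono (exp_nonneg _) hmem.1 exp_le).trans hmem.2⟩

lemma convexOn_log_of_quasiconvexOn_of_map_add_smul {V : Type*} [AddCommGroup V] [Module ℝ V]
    {G : V → ℝ} {e : V} (hG : QuasiconvexOn ℝ Set.univ G) (hpos : ∀ t, 0 < G t)
    (hexp : ∀ t (c : ℝ), G (t + c • e) = Real.exp c * G t) :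
    ConvexOn ℝ Set.univ fun t => Real.log (G t) := by
  refine ⟨convex_univ, fun t _ u _ a b ha hb hab => ?_⟩
  have normalized (w : V) : G (w + (-Real.log (G w)) • e) ≤ 1 := by
    rw [hexp, Real.exp_neg, Real.exp_log (hpos w), inv_mul_cancel₀ (hpos w).ne']
  have combined : G (a • (t + (-Real.log (G t)) • e) + b • (u + (-Real.log (G u)) • e)) ≤ 1 :=
    (hG 1 ⟨Set.mem_univ _, normalized t⟩ ⟨Set.mem_univ _, normalized u⟩ ha hb hab).2
  have regroup : a • (t + (-Real.log (G t)) • e) + b • (u + (-Real.log (G u)) • e) =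
      (a • t + b • u) + (-(a • Real.log (G t) + b • Real.log (G u))) • e := by
    simp only [smul_eq_mul]
    module
  rw [regroup, hexp, Real.exp_neg, inv_mul_le_one₀ (Real.exp_pos _)] at combined
  exact (Real.log_le_iff_le_exp (hpos _)).2 combined

/-- Invariance of a function on `ι → ℝ` under all changes of signs of coordinates; for a norm, this
says that the standard basis is 1-unconditional. -/
def IsUnconditional {ι α : Type*} (F : (ι → ℝ) → α) : Prop :=
  ∀ (σ : ι → Bool) (x : ι → ℝ), F (fun j => boolSign (σ j) * x j) = F x

namespace IsUnconditional

variable {ι : Type*} [Finite ι]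

lemma le_of_abs_le_abs {α : Type*} [Preorder α] {F : (ι → ℝ) → α} (hF : IsUnconditional F)
    (hconv : QuasiconvexOn ℝ Set.univ F) {x y : ι → ℝ} (hxy : |x| ≤ |y|) : F x ≤ F y := by
  let S : Set (ι → ℝ) := LinearMap.mulRight ℝ y ⁻¹' {z | z ∈ Set.univ ∧ F z ≤ F y}
  have signs_subset : Set.univ.pi (fun _ : ι => Set.range boolSign) ⊆ S := by
    rw [← Set.range_piMap]
    rintro _ ⟨σ, rfl⟩
    exact ⟨Set.mem_univ _, (hF σ y).le⟩
  have cube_subset : Set.univ.pi (fun _ : ι => Set.Icc (-1 : ℝ) 1) ⊆ S := by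
    simpa only [convexHull_pi, convexHull_range_boolSign] using
      convexHull_min signs_subset ((hconv (F y)).linear_preimage _)
  have quotient_mem : x / y ∈ Set.univ.pi (fun _ : ι => Set.Icc (-1 : ℝ) 1) := fun j _ =>
    abs_le.1 (by simpa [abs_div] using div_le_one_of_le₀ (hxy j) (abs_nonneg (y j)))
  have quotient_mul : x / y * y = x := funext fun j =>
    div_mul_cancel_of_imp fun hy => abs_nonpos_iff.1 (by simpa [hy] using hxy j)
  simpa [S, quotient_mul] using cube_subset quotient_mem

lemma monotoneOn {α : Type*} [Preorder α] {F : (ι → ℝ) → α} (hF : IsUnconditional F)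
    (hconv : QuasiconvexOn ℝ Set.univ F) : MonotoneOn F (Set.Ici 0) := fun x hx y hy hxy =>
  hF.le_of_abs_le_abs hconv (by rwa [abs_of_nonneg hx, abs_of_nonneg hy])

theorem convexOn_log_comp_exp {p : Seminorm ℝ (ι → ℝ)} (hp : IsUnconditional p)
    (hpos : ∀ t : ι → ℝ, 0 < p fun j => Real.exp (t j)) :
    ConvexOn ℝ Set.univ fun t : ι → ℝ => Real.log (p fun j => Real.exp (t j)) := by
  have quasiconvex_orthant : QuasiconvexOn ℝ (Set.Ici 0) p :=
    (p.convexOn.subset (Set.subset_univ _) (convex_Ici 0)).quasiconvexOn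
  refine convexOn_log_of_quasiconvexOn_of_map_add_smul (e := 1)
    (quasiconvexOn_comp_exp quasiconvex_orthant (hp.monotoneOn p.convexOn.quasiconvexOn))
    hpos fun t c => ?_
  have exp_translate : (fun j => Real.exp ((t + c • 1) j)) =
      Real.exp c • fun j => Real.exp (t j) := by
    ext j
    simp [Real.exp_add, mul_comm]
  rw [exp_translate, map_smul_eq_mul, Real.norm_eq_abs, Real.abs_exp]

end IsUnconditional

section Rademacher

variable {ι E : Type*} [Fintype ι] [DecidableEq ι] [SeminormedAddCommGroup E] [NormedSpace ℝ E]

/-- The Rademacher average `x ↦ E‖∑ j, ε j x j v j‖` of the vectors `v j`, as a seminorm in the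
coefficients `x`. The expectation is the mean over all choices of signs `s : ι → Bool`. -/
noncomputable def rademacherSeminorm (v : ι → E) : Seminorm ℝ (ι → ℝ) :=
  .of (fun x => (2 ^ Fintype.card ι)⁻¹ * ∑ s : ι → Bool, ‖∑ j, (x j * boolSign (s j)) • v j‖)
    (fun x y => by
      simp only [Pi.add_apply, add_mul, add_smul, sum_add_distrib, ← mul_add]
      gcongr
      rw [← sum_add_distrib]
      exact sum_le_sum fun s _ => norm_add_le _ _)
    (fun c x => by
      simp only [Pi.smul_apply, smul_eq_mul, mul_assoc, mul_smul c, ← smul_sum, norm_smul,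
        ← mul_sum]
      ring)

lemma rademacherSeminorm_apply (v : ι → E) (x : ι → ℝ) :
    rademacherSeminorm v x =
      (2 ^ Fintype.card ι)⁻¹ * ∑ s : ι → Bool, ‖∑ j, (x j * boolSign (s j)) • v j‖ :=
  rfl

lemma isUnconditional_rademacherSeminorm (v : ι → E) : IsUnconditional (rademacherSeminorm v) := by
  intro σ x
  have involutive : Function.Involutive fun (s : ι → Bool) j => σ j == s j := fun s =>
    funext fun j => Bool.beq_self_left (σ j) (s j)
  simp only [rademacherSeminorm_apply]
  congr 1
  refine Fintype.sum_equiv involutive.toPerm _ _ fun s => ?_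
  simp only [Function.Involutive.coe_toPerm, ← boolSign_mul_boolSign, mul_left_comm, mul_assoc]

lemma rademacherSeminorm_single (v : ι → E) (j : ι) (c : ℝ) :
    rademacherSeminorm v (Pi.single j c) = |c| * ‖v j‖ := by
  have sum_eq (s : ι → Bool) :
      ∑ i, (Pi.single (M := fun _ => ℝ) j c i * boolSign (s i)) • v i =
        (c * boolSign (s j)) • v j := by
    rw [Fintype.sum_eq_single j fun i hij => by simp [hij], Pi.single_eq_same]
  simp [rademacherSeminorm_apply, sum_eq, norm_smul, abs_boolSign]

lemma abs_mul_norm_le_rademacherSeminorm (v : ι → E) (x : ι → ℝ) (j : ι) :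
    |x j| * ‖v j‖ ≤ rademacherSeminorm v x := by
  rw [← rademacherSeminorm_single]
  refine (isUnconditional_rademacherSeminorm v).le_of_abs_le_abs
    (rademacherSeminorm v).convexOn.quasiconvexOn fun i => ?_
  obtain rfl | hij := eq_or_ne i j
  · simp
  · simp [hij]

theorem log_L1_rademacher_convex_general (v : ι → E) (hv : ∃ j, ‖v j‖ ≠ 0) :
    ConvexOn ℝ Set.univ fun t : ι → ℝ =>
      Real.log (rademacherSeminorm v fun j => Real.exp (t j)) := by
  obtain ⟨j, hj⟩ := hv
  refine (isUnconditional_rademacherSeminorm v).convexOn_log_comp_exp fun t => ?_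
  exact (by positivity : 0 < |Real.exp (t j)| * ‖v j‖).trans_le
    (abs_mul_norm_le_rademacherSeminorm v (fun i => Real.exp (t i)) j)

end Rademacher

/-- For independent Rademacher signs `ε_1, …, ε_n` (modelled by the uniform measure on
`{-1,1}^n`, encoded via `Fin n → Bool`), the function
`t ↦ log E|e^{t_1}ε_1 + … + e^{t_n}ε_n|` is convex on `ℝ^n`. -/
theorem log_L1_rademacher_convex (n : ℕ) :
    ConvexOn ℝ Set.univ (fun t : Fin n → ℝ =>
      Real.log ((2 ^ n : ℝ)⁻¹ *
        ∑ s : Fin n → Bool,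
          |∑ j, Real.exp (t j) * (if s j then (1 : ℝ) else -1)|)) := by
  cases n with
  | zero => simpa using convexOn_const (0 : ℝ) convex_univ
  | succ n =>
    simpa [rademacherSeminorm_apply, boolSign] using
      log_L1_rademacher_convex_general (fun _ : Fin (n + 1) => (1 : ℝ)) ⟨0, by simp⟩
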